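/- arXiv:1601.04001 — 2 statements merged into one kernel-verified Lean document; each statement's English description precedes it below -/
import Mathlib

section
/- Let F : E → E be monotone and locally Lipschitz, g : E → ℝ convex, α ∈ (0, √2 − 1), λ_max > 0, and assume VI(F, g) has at least one solution. Let (x_n)_{n≥0}, (y_n)_{n≥0} be sequences in E and (λ_n)_{n≥0}, (θ_n)_{n≥1} positive reals with θ_0 := 1 such that for all n ≥ 1: 0 < λ_n ≤ λ_max, λ_n = θ_n·λ_{n−1}, θ_n² ≤ 1 + θ_{n−1}, y_n = x_n + θ_n·(x_n − x_{n−1}), λ_n·‖F(y_n) − F(y_{n−1})‖ ≤ α·‖y_n − y_{n−1}‖, and for all n ≥ 0, x_{n+1} is the minimizer over E of z ↦ λ_n·g(z) + (1/2)·‖z − (x_n − λ_n·F(y_n))‖². Assume moreover that limsup λ_n > 0. Then (x_n) and (y_n) converge to a point x* ∈ E that solves VI(F, g). -/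
open scoped RealInnerProductSpace

/-!
For a solution `p`, the energy `‖x (n+1) - p‖² + α ‖x (n+1) - y n‖² + 2 lam (n+1) θ (n+1) Φ (x n)`,
where `Φ z = ⟪F p, z - p⟫ + g z - g p ≥ 0`, decreases at every step by at least
`(1 - α (1 + √2)) (‖x (n+2) - y (n+1)‖² + ‖y (n+1) - x (n+1)‖²)`. Here the condition
`θ (n+1) ^ 2 ≤ 1 + θ n` makes the `Φ`-terms telescope, and `α < √2 - 1` makes the factor positive.
Hence the iterates are bounded and both residuals tend to zero. Along a subsequence on which the
step sizes stay away from zero the iterates accumulate at a solution. The energy with respect to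
*that* solution is antitone and tends to zero along the subsequence, hence along the whole
sequence.
-/

open Filter Set Topology

lemma tendsto_zero_of_add_le {a r : ℕ → ℝ} (ha : BddBelow (range a)) (hr : ∀ n, 0 ≤ r n)
    (h : ∀ n, a (n + 1) + r n ≤ a n) : Tendsto r atTop (𝓝 0) := by
  have anti : Antitone a := antitone_nat_of_succ_le fun n => by linarith [h n, hr n]
  have lim := tendsto_atTop_ciInf anti ha
  have diff : Tendsto (fun n => a n - a (n + 1)) atTop (𝓝 0) := by
    simpa using lim.sub (lim.comp (tendsto_add_atTop_nat 1))
  exact squeeze_zero hr (fun n => by linarith [h n]) diff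

lemma tendsto_zero_of_norm_sq_le {ι V : Type*} [SeminormedAddCommGroup V] {l : Filter ι}
    {u : ι → V} {a : ι → ℝ} (hu : ∀ i, ‖u i‖ ^ 2 ≤ a i) (ha : Tendsto a l (𝓝 0)) :
    Tendsto u l (𝓝 0) :=
  squeeze_zero_norm (fun i => Real.le_sqrt_of_sq_le (hu i)) (by simpa using ha.sqrt)

lemma exists_pos_frequently_lt_of_not_tendsto_zero {ι : Type*} {l : Filter ι} {u : ι → ℝ}
    (hu : ∀ i, 0 ≤ u i) (h : ¬ Tendsto u l (𝓝 0)) : ∃ c > 0, ∃ᶠ i in l, c < u i := by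
  contrapose! h
  refine tendsto_order.2 ⟨fun b hb => .of_forall fun i => hb.trans_le (hu i), fun b hb => ?_⟩
  filter_upwards [h (b / 2) (half_pos hb)] with i hi
  linarith

/-- The weights are those for which the two squared residuals end up with the same coefficient
in `ProxExtrapolation.energy_succ_add_le`. -/
lemma two_mul_add_mul_le (p q b : ℝ) :
    2 * ((p + q) * b) ≤ (1 + √2) * p ^ 2 + √2 * b ^ 2 + q ^ 2 := by
  have sqrt_sq : √2 ^ 2 = 2 := Real.sq_sqrt zero_le_two
  have complete_squares : (1 + √2) * p ^ 2 + √2 * b ^ 2 + q ^ 2 - 2 * ((p + q) * b) =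
      (1 + √2) * (p - (√2 - 1) * b) ^ 2 + (q - b) ^ 2 := by
    linear_combination (-(√2 * b ^ 2) + b ^ 2 + 2 * p * b) * sqrt_sq
  have : 0 ≤ (1 + √2) * (p - (√2 - 1) * b) ^ 2 + (q - b) ^ 2 := by positivity
  linarith

lemma one_sub_mul_one_add_sqrt_two_pos {α : ℝ} (hα : α < √2 - 1) : 0 < 1 - α * (1 + √2) := by
  have sqrt_sq : √2 ^ 2 = 2 := Real.sq_sqrt zero_le_two
  nlinarith [Real.sqrt_nonneg 2]

section InnerProductSpace

variable {E : Type*} [NormedAddCommGroup E] [InnerProductSpace ℝ E]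

lemma two_mul_inner_sub_sub (a b c : E) :
    2 * ⟪b - a, c - b⟫ = ‖c - a‖ ^ 2 - ‖b - a‖ ^ 2 - ‖c - b‖ ^ 2 := by
  have h := norm_add_sq_real (b - a) (c - b)
  rw [add_comm, sub_add_sub_cancel] at h
  linarith

lemma sub_le_inner_of_isMinOn_add_norm_sq {s : Set E} {f : E → ℝ} (hf : ConvexOn ℝ s f)
    {p w : E} (hp : p ∈ s) (hmin : IsMinOn (fun z => f z + 1 / 2 * ‖z - w‖ ^ 2) s p)
    {z : E} (hz : z ∈ s) : f p - f z ≤ ⟪p - w, z - p⟫ := by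
  have segment_bound : ∀ t ∈ Ioc (0 : ℝ) 1,
      f p - f z ≤ ⟪p - w, z - p⟫ + t / 2 * ‖z - p‖ ^ 2 := by
    rintro t ⟨ht0, ht1⟩
    have ht1' : 0 ≤ 1 - t := sub_nonneg.2 ht1
    have hconv := hf.2 hp hz ht1' ht0.le (sub_add_cancel 1 t)
    have hle := isMinOn_iff.1 hmin _ (hf.1 hp hz ht1' ht0.le (sub_add_cancel 1 t))
    have expand : ‖(1 - t) • p + t • z - w‖ ^ 2 =
        ‖p - w‖ ^ 2 + 2 * (t * ⟪p - w, z - p⟫) + t ^ 2 * ‖z - p‖ ^ 2 := by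
      rw [show (1 - t) • p + t • z - w = (p - w) + t • (z - p) by module, norm_add_sq_real,
        real_inner_smul_right, norm_smul, mul_pow, Real.norm_eq_abs, sq_abs]
    simp only [smul_eq_mul] at hconv
    refine le_of_mul_le_mul_left ?_ ht0
    linarith
  have lim : Tendsto (fun t : ℝ => ⟪p - w, z - p⟫ + t / 2 * ‖z - p‖ ^ 2) (𝓝[>] 0)
      (𝓝 ⟪p - w, z - p⟫) :=
    (Continuous.tendsto' (by fun_prop) _ _ (by simp)).mono_left nhdsWithin_le_nhds
  exact ge_of_tendsto lim (by
    filter_upwards [Ioc_mem_nhdsGT one_pos] using segment_bound)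

/-- The function `z ↦ ⟪F p, z - p⟫ + g z - g p` whose nonnegativity is the variational inequality
`VI(F, g)` at `p`. -/
def viGap (F : E → E) (g : E → ℝ) (p z : E) : ℝ := ⟪F p, z - p⟫ + g z - g p

/-- The point `p` solves the variational inequality `VI(F, g)`. -/
def IsVISolution (F : E → E) (g : E → ℝ) (p : E) : Prop := ∀ z, 0 ≤ viGap F g p z

variable {F : E → E} {g : E → ℝ} {α : ℝ} {p : E}

lemma tendsto_viGap_self {ι : Type*} {l : Filter ι} {u : ι → E} (hg : ContinuousAt g p)
    (hu : Tendsto u l (𝓝 p)) : Tendsto (fun i => viGap F g p (u i)) l (𝓝 0) := by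
  simpa [viGap] using
    ((tendsto_const_nhds (x := F p)).inner (hu.sub_const p)).add (hg.tendsto.comp hu)
      |>.sub_const (g p)

lemma isVISolution_of_tendsto_prox {ι : Type*} {l : Filter ι} [l.NeBot] {u v w : ι → E}
    {μ : ι → ℝ} {c : ℝ} (hF : ContinuousAt F p) (hg : ContinuousAt g p) (hc : 0 < c)
    (hμ : ∀ i, c ≤ μ i)
    (hprox : ∀ i z, μ i * (g (v i) - g z) ≤ ⟪v i - u i + μ i • F (w i), z - v i⟫)
    (hu : Tendsto u l (𝓝 p)) (hv : Tendsto v l (𝓝 p)) (hw : Tendsto w l (𝓝 p)) :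
    IsVISolution F g p := by
  intro z
  have hμpos : ∀ i, 0 < μ i := fun i => hc.trans_le (hμ i)
  have hzv : Tendsto (fun i => z - v i) l (𝓝 (z - p)) := hv.const_sub z
  have scaled_step : Tendsto (fun i => (μ i)⁻¹ * ⟪v i - u i, z - v i⟫) l (𝓝 0) := by
    refine isBoundedUnder_le_mul_tendsto_zero (isBoundedUnder_of ⟨c⁻¹, fun i => ?_⟩)
      (by simpa using (hv.sub hu).inner hzv)
    simpa [abs_of_pos (hμpos i)] using inv_anti₀ hc (hμ i)
  have lim : Tendsto (fun i => (μ i)⁻¹ * ⟪v i - u i, z - v i⟫ +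
      (⟪F (w i), z - v i⟫ + g z - g (v i))) l (𝓝 (viGap F g p z)) := by
    simpa [viGap] using scaled_step.add
      ((((hF.tendsto.comp hw).inner hzv).add_const (g z)).sub (hg.tendsto.comp hv))
  refine ge_of_tendsto' lim fun i => ?_
  have h := hprox i z
  rw [inner_add_left, real_inner_smul_left, ← sub_nonneg] at h
  have factor : (μ i)⁻¹ * ⟪v i - u i, z - v i⟫ + (⟪F (w i), z - v i⟫ + g z - g (v i)) =
      (μ i)⁻¹ * (⟪v i - u i, z - v i⟫ + μ i * ⟪F (w i), z - v i⟫ - μ i * (g (v i) - g z)) := by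
    field_simp [(hμpos i).ne']
    ring
  rw [factor]
  exact mul_nonneg (inv_nonneg.2 (hμpos i).le) h

/-- A run of the adaptive proximal extrapolated gradient method for `VI(F, g)` with line search
constant `α`: iterates `x`, extrapolated points `y`, step sizes `lam` and their ratios `θ`. The
recurrences are indexed by `n + 1` instead of `n ≥ 1`. -/
structure ProxExtrapolation (F : E → E) (g : E → ℝ) (α : ℝ) where
  x : ℕ → E
  y : ℕ → E
  lam : ℕ → ℝ
  θ : ℕ → ℝ
  lam_pos : ∀ n, 0 < lam n
  lam_succ : ∀ n, lam (n + 1) = θ (n + 1) * lam n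
  sq_θ_succ_le : ∀ n, θ (n + 1) ^ 2 ≤ 1 + θ n
  y_succ : ∀ n, y (n + 1) = x (n + 1) + θ (n + 1) • (x (n + 1) - x n)
  line_search : ∀ n, lam (n + 1) * ‖F (y (n + 1)) - F (y n)‖ ≤ α * ‖y (n + 1) - y n‖
  isMinOn_prox : ∀ n, IsMinOn
    (fun z => lam n * g z + 1 / 2 * ‖z - (x n - lam n • F (y n))‖ ^ 2) univ (x (n + 1))

namespace ProxExtrapolation

variable (s : ProxExtrapolation F g α)

lemma θ_succ_pos (n : ℕ) : 0 < s.θ (n + 1) :=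
  pos_of_mul_pos_left (s.lam_succ n ▸ s.lam_pos (n + 1)) (s.lam_pos n).le

lemma θ_le_max (n : ℕ) : s.θ n ≤ max 2 (s.θ 0) := by
  induction n with
  | zero => exact le_max_right _ _
  | succ n ih =>
    have two_le : 2 ≤ max 2 (s.θ 0) := le_max_left _ _
    nlinarith [s.sq_θ_succ_le n, s.θ_succ_pos n]

lemma lam_succ_mul_θ_succ_le (n : ℕ) : s.lam (n + 1) * s.θ (n + 1) ≤ s.lam n * (1 + s.θ n) :=
  calc s.lam (n + 1) * s.θ (n + 1) = s.lam n * s.θ (n + 1) ^ 2 := by rw [s.lam_succ]; ring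
    _ ≤ s.lam n * (1 + s.θ n) := mul_le_mul_of_nonneg_left (s.sq_θ_succ_le n) (s.lam_pos n).le

lemma isBoundedUnder_lam_mul_θ (hbdd : atTop.IsBoundedUnder (· ≤ ·) s.lam) :
    atTop.IsBoundedUnder (· ≤ ·) (norm ∘ fun n => s.lam (n + 1) * s.θ (n + 1)) := by
  obtain ⟨b, hb⟩ := hbdd
  refine isBoundedUnder_of_eventually_le (a := b * max 2 (s.θ 0)) ?_
  filter_upwards [(tendsto_add_atTop_nat 1).eventually hb] with n hn
  have hlam := s.lam_pos (n + 1)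
  have hθ := s.θ_succ_pos n
  rw [Function.comp_apply, Real.norm_of_nonneg (by positivity)]
  exact mul_le_mul hn (s.θ_le_max _) hθ.le (hlam.le.trans hn)

lemma prox_inequality (hg : ConvexOn ℝ univ g) (n : ℕ) (z : E) :
    s.lam n * (g (s.x (n + 1)) - g z) ≤
      ⟪s.x (n + 1) - s.x n + s.lam n • F (s.y n), z - s.x (n + 1)⟫ := by
  have h := sub_le_inner_of_isMinOn_add_norm_sq (hg.smul (s.lam_pos n).le) (mem_univ _)
    (s.isMinOn_prox n) (mem_univ z)
  rwa [smul_eq_mul, smul_eq_mul, ← mul_sub, ← sub_add] at h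

/-- The prox inequality at step `n` is tested at `x (n + 2)` with weight `θ (n + 1)` and at `x n`
with weight `θ (n + 1) ^ 2`, so that the test directions add up to `x (n + 2) - y (n + 1)`. -/
lemma extrapolated_prox_inequality (hg : ConvexOn ℝ univ g) (n : ℕ) :
    s.lam (n + 1) * ((1 + s.θ (n + 1)) * g (s.x (n + 1)) - s.θ (n + 1) * g (s.x n)
        - g (s.x (n + 2))) ≤
      ⟪s.y (n + 1) - s.x (n + 1), s.x (n + 2) - s.y (n + 1)⟫ +
        s.lam (n + 1) * ⟪F (s.y n), s.x (n + 2) - s.y (n + 1)⟫ := by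
  have at_next := mul_le_mul_of_nonneg_left (s.prox_inequality hg n (s.x (n + 2)))
    (s.θ_succ_pos n).le
  have at_prev := mul_le_mul_of_nonneg_left (s.prox_inequality hg n (s.x n))
    (sq_nonneg (s.θ (n + 1)))
  have step_eq : s.θ (n + 1) • (s.x (n + 1) - s.x n + s.lam n • F (s.y n)) =
      s.y (n + 1) - s.x (n + 1) + s.lam (n + 1) • F (s.y n) := by
    rw [s.y_succ, s.lam_succ]; module
  have test_eq : s.x (n + 2) - s.y (n + 1) =
      (s.x (n + 2) - s.x (n + 1)) + s.θ (n + 1) • (s.x n - s.x (n + 1)) := by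
    rw [s.y_succ]; module
  rw [← real_inner_smul_left, ← inner_add_left, ← step_eq, test_eq, inner_add_right,
    real_inner_smul_left, real_inner_smul_left, real_inner_smul_right, s.lam_succ]
  linarith

lemma norm_sub_sq_succ_le (hg : ConvexOn ℝ univ g) (hp : ∀ z, 0 ≤ ⟪F z - F p, z - p⟫) (n : ℕ) :
    ‖s.x (n + 2) - p‖ ^ 2 ≤ ‖s.x (n + 1) - p‖ ^ 2 - ‖s.y (n + 1) - s.x (n + 1)‖ ^ 2
      - ‖s.x (n + 2) - s.y (n + 1)‖ ^ 2
      + 2 * (s.lam (n + 1) * ⟪F (s.y (n + 1)) - F (s.y n), s.y (n + 1) - s.x (n + 2)⟫)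
      - 2 * s.lam (n + 1) * ((1 + s.θ (n + 1)) * viGap F g p (s.x (n + 1))
          - s.θ (n + 1) * viGap F g p (s.x n)) := by
  have hprox := s.prox_inequality hg (n + 1) p
  have hextra := s.extrapolated_prox_inequality hg n
  have hmono := mul_nonneg (s.lam_pos (n + 1)).le (hp (s.y (n + 1)))
  have polar_prox := two_mul_inner_sub_sub (s.x (n + 1)) (s.x (n + 2)) p
  have polar_extra := two_mul_inner_sub_sub (s.x (n + 1)) (s.y (n + 1)) (s.x (n + 2))
  have gap_affine : ⟪F p, s.y (n + 1) - p⟫ =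
      (1 + s.θ (n + 1)) * ⟪F p, s.x (n + 1) - p⟫ - s.θ (n + 1) * ⟪F p, s.x n - p⟫ := by
    rw [← real_inner_smul_right, ← real_inner_smul_right, ← inner_sub_right, s.y_succ]
    congr 1
    module
  have split_test : ⟪F (s.y (n + 1)), p - s.x (n + 2)⟫ =
      ⟪F (s.y (n + 1)), s.y (n + 1) - s.x (n + 2)⟫ - ⟪F (s.y (n + 1)), s.y (n + 1) - p⟫ := by
    rw [← inner_sub_right, sub_sub_sub_cancel_left]
  have flip_test : ⟪F (s.y n), s.x (n + 2) - s.y (n + 1)⟫ =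
      -⟪F (s.y n), s.y (n + 1) - s.x (n + 2)⟫ := by
    rw [← inner_neg_right, neg_sub]
  rw [norm_sub_rev p (s.x (n + 1)), norm_sub_rev p (s.x (n + 2))] at polar_prox
  rw [inner_add_left, real_inner_smul_left, split_test] at hprox
  rw [flip_test] at hextra
  rw [inner_sub_left, gap_affine] at hmono
  rw [inner_sub_left]
  unfold viGap
  linarith

lemma two_mul_lam_mul_inner_le (hα : 0 ≤ α) (n : ℕ) :
    2 * (s.lam (n + 1) * ⟪F (s.y (n + 1)) - F (s.y n), s.y (n + 1) - s.x (n + 2)⟫) ≤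
      α * ((1 + √2) * ‖s.y (n + 1) - s.x (n + 1)‖ ^ 2 + √2 * ‖s.x (n + 2) - s.y (n + 1)‖ ^ 2
        + ‖s.x (n + 1) - s.y n‖ ^ 2) := by
  have hlam := (s.lam_pos (n + 1)).le
  calc 2 * (s.lam (n + 1) * ⟪F (s.y (n + 1)) - F (s.y n), s.y (n + 1) - s.x (n + 2)⟫)
    _ ≤ 2 * (s.lam (n + 1) * (‖F (s.y (n + 1)) - F (s.y n)‖ * ‖s.x (n + 2) - s.y (n + 1)‖)) := by
      rw [norm_sub_rev (s.x (n + 2))]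
      gcongr
      exact real_inner_le_norm _ _
    _ = 2 * (s.lam (n + 1) * ‖F (s.y (n + 1)) - F (s.y n)‖ * ‖s.x (n + 2) - s.y (n + 1)‖) := by
      ring
    _ ≤ 2 * (α * (‖s.y (n + 1) - s.x (n + 1)‖ + ‖s.x (n + 1) - s.y n‖)
          * ‖s.x (n + 2) - s.y (n + 1)‖) := by
      refine mul_le_mul_of_nonneg_left (mul_le_mul_of_nonneg_right ?_ (norm_nonneg _)) zero_le_two
      exact (s.line_search n).trans
        (mul_le_mul_of_nonneg_left (norm_sub_le_norm_sub_add_norm_sub _ _ _) hα)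
    _ = α * (2 * ((‖s.y (n + 1) - s.x (n + 1)‖ + ‖s.x (n + 1) - s.y n‖)
          * ‖s.x (n + 2) - s.y (n + 1)‖)) := by ring
    _ ≤ _ := mul_le_mul_of_nonneg_left (two_mul_add_mul_le _ _ _) hα

/-- The Lyapunov function of the method with respect to the point `p`. -/
def energy (p : E) (n : ℕ) : ℝ :=
  ‖s.x (n + 1) - p‖ ^ 2 + α * ‖s.x (n + 1) - s.y n‖ ^ 2
    + 2 * (s.lam (n + 1) * s.θ (n + 1)) * viGap F g p (s.x n)

/-- The squared residuals whose multiple by `1 - α * (1 + √2)` the energy loses in one step. -/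
def residual (n : ℕ) : ℝ :=
  ‖s.x (n + 2) - s.y (n + 1)‖ ^ 2 + ‖s.y (n + 1) - s.x (n + 1)‖ ^ 2

lemma residual_nonneg (n : ℕ) : 0 ≤ s.residual n := by
  unfold residual
  positivity

lemma energy_succ_add_le (hg : ConvexOn ℝ univ g) (hα : 0 ≤ α)
    (hmono : ∀ z, 0 ≤ ⟪F z - F p, z - p⟫) (hp : IsVISolution F g p) (n : ℕ) :
    s.energy p (n + 1) + (1 - α * (1 + √2)) * s.residual n ≤ s.energy p n := by
  have descent := s.norm_sub_sq_succ_le hg hmono n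
  have cross_term := s.two_mul_lam_mul_inner_le hα n
  have weight := mul_le_mul_of_nonneg_right (s.lam_succ_mul_θ_succ_le (n + 1))
    (hp (s.x (n + 1)))
  unfold energy residual
  linarith

lemma norm_sub_sq_le_energy (hα : 0 ≤ α) (hp : IsVISolution F g p) (n : ℕ) :
    ‖s.x (n + 1) - p‖ ^ 2 ≤ s.energy p n := by
  have hlam := s.lam_pos (n + 1)
  have hθ := s.θ_succ_pos n
  have hgap := hp (s.x n)
  unfold energy
  rw [add_assoc]
  exact le_add_of_nonneg_right (by positivity)

lemma energy_antitone (hg : ConvexOn ℝ univ g) (hα : 0 ≤ α) (hα' : α < √2 - 1)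
    (hmono : ∀ z, 0 ≤ ⟪F z - F p, z - p⟫) (hp : IsVISolution F g p) :
    Antitone (s.energy p) :=
  antitone_nat_of_succ_le fun n => by
    have loss := mul_nonneg (one_sub_mul_one_add_sqrt_two_pos hα').le (s.residual_nonneg n)
    linarith [s.energy_succ_add_le hg hα hmono hp n]

lemma tendsto_residual (hg : ConvexOn ℝ univ g) (hα : 0 ≤ α) (hα' : α < √2 - 1)
    (hmono : ∀ z, 0 ≤ ⟪F z - F p, z - p⟫) (hp : IsVISolution F g p) :
    Tendsto s.residual atTop (𝓝 0) := by
  have hκ := one_sub_mul_one_add_sqrt_two_pos hα'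
  have bddBelow : BddBelow (range (s.energy p)) :=
    ⟨0, forall_mem_range.2 fun n => (sq_nonneg _).trans (s.norm_sub_sq_le_energy hα hp n)⟩
  have lim := tendsto_zero_of_add_le bddBelow
    (fun n => mul_nonneg hκ.le (s.residual_nonneg n)) (s.energy_succ_add_le hg hα hmono hp)
  simpa [hκ.ne'] using lim.const_mul (1 - α * (1 + √2))⁻¹

lemma tendsto_x_succ_sub_y (hres : Tendsto s.residual atTop (𝓝 0)) :
    Tendsto (fun n => s.x (n + 1) - s.y n) atTop (𝓝 0) :=
  (tendsto_add_atTop_iff_nat 1).1 <|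
    tendsto_zero_of_norm_sq_le (fun _ => le_add_of_nonneg_right (sq_nonneg _)) hres

lemma tendsto_y_sub_x (hres : Tendsto s.residual atTop (𝓝 0)) :
    Tendsto (fun n => s.y n - s.x n) atTop (𝓝 0) :=
  (tendsto_add_atTop_iff_nat 1).1 <|
    tendsto_zero_of_norm_sq_le (fun _ => le_add_of_nonneg_left (sq_nonneg _)) hres

lemma eventually_mem_closedBall (hg : ConvexOn ℝ univ g) (hα : 0 ≤ α) (hα' : α < √2 - 1)
    (hmono : ∀ z, 0 ≤ ⟪F z - F p, z - p⟫) (hp : IsVISolution F g p) :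
    ∀ᶠ n in atTop, s.x n ∈ Metric.closedBall p √(s.energy p 0) := by
  filter_upwards [eventually_ge_atTop 1] with n hn
  obtain ⟨m, rfl⟩ := Nat.exists_eq_add_of_le' hn
  exact mem_closedBall_iff_norm.2 <| Real.le_sqrt_of_sq_le <|
    (s.norm_sub_sq_le_energy hα hp m).trans
      (s.energy_antitone hg hα hα' hmono hp (Nat.zero_le m))

section Subsequence

variable {σ : ℕ → ℕ}

lemma tendsto_y_subseq (hres : Tendsto s.residual atTop (𝓝 0)) (hσ : Tendsto σ atTop atTop)
    (hx : Tendsto (s.x ∘ σ) atTop (𝓝 p)) : Tendsto (s.y ∘ σ) atTop (𝓝 p) := by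
  simpa [Function.comp_def] using ((s.tendsto_y_sub_x hres).comp hσ).add hx

lemma tendsto_x_succ_subseq (hres : Tendsto s.residual atTop (𝓝 0)) (hσ : Tendsto σ atTop atTop)
    (hx : Tendsto (s.x ∘ σ) atTop (𝓝 p)) : Tendsto (fun k => s.x (σ k + 1)) atTop (𝓝 p) := by
  simpa [Function.comp_def] using
    ((s.tendsto_x_succ_sub_y hres).comp hσ).add (s.tendsto_y_subseq hres hσ hx)

lemma tendsto_energy_subseq (hg : ContinuousAt g p)
    (hbdd : atTop.IsBoundedUnder (· ≤ ·) s.lam) (hres : Tendsto s.residual atTop (𝓝 0))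
    (hσ : Tendsto σ atTop atTop) (hx : Tendsto (s.x ∘ σ) atTop (𝓝 p)) :
    Tendsto (s.energy p ∘ σ) atTop (𝓝 0) := by
  have distance := ((s.tendsto_x_succ_subseq hres hσ hx).sub_const p).norm.pow 2
  have increment := (((s.tendsto_x_succ_sub_y hres).comp hσ).norm.pow 2).const_mul α
  have weight_bdd : atTop.IsBoundedUnder (· ≤ ·)
      (norm ∘ fun k => s.lam (σ k + 1) * s.θ (σ k + 1)) :=
    hσ.isBoundedUnder_comp (s.isBoundedUnder_lam_mul_θ hbdd)
  have weighted_gap := isBoundedUnder_le_mul_tendsto_zero weight_bdd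
    (tendsto_viGap_self (F := F) hg hx)
  simpa [energy, Function.comp_def, mul_assoc] using
    (distance.add increment).add (weighted_gap.const_mul 2)

lemma tendsto_of_tendsto_subseq (hg : ConvexOn ℝ univ g) (hgp : ContinuousAt g p)
    (hα : 0 ≤ α) (hα' : α < √2 - 1) (hmono : ∀ z, 0 ≤ ⟪F z - F p, z - p⟫)
    (hp : IsVISolution F g p) (hbdd : atTop.IsBoundedUnder (· ≤ ·) s.lam)
    (hσ : Tendsto σ atTop atTop) (hx : Tendsto (s.x ∘ σ) atTop (𝓝 p)) :
    Tendsto s.x atTop (𝓝 p) := by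
  have hres := s.tendsto_residual hg hα hα' hmono hp
  have energy_lim : Tendsto (s.energy p) atTop (𝓝 0) :=
    (tendsto_iff_tendsto_subseq_of_antitone (s.energy_antitone hg hα hα' hmono hp) hσ).2
      (s.tendsto_energy_subseq hgp hbdd hres hσ hx)
  refine (tendsto_add_atTop_iff_nat 1).1 (tendsto_sub_nhds_zero_iff.1 ?_)
  exact tendsto_zero_of_norm_sq_le (s.norm_sub_sq_le_energy hα hp) energy_lim

end Subsequence

lemma exists_tendsto_subseq_lam_gt [ProperSpace E] (hg : ConvexOn ℝ univ g) (hα : 0 ≤ α)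
    (hα' : α < √2 - 1) (hmono : ∀ z, 0 ≤ ⟪F z - F p, z - p⟫) (hp : IsVISolution F g p)
    (hlam : ¬ Tendsto s.lam atTop (𝓝 0)) :
    ∃ q, ∃ c > 0, ∃ σ : ℕ → ℕ, Tendsto σ atTop atTop ∧ (∀ k, c < s.lam (σ k)) ∧
      Tendsto (s.x ∘ σ) atTop (𝓝 q) := by
  obtain ⟨c, hc, hfreq⟩ :=
    exists_pos_frequently_lt_of_not_tendsto_zero (fun n => (s.lam_pos n).le) hlam
  obtain ⟨φ, hφ, hφ_spec⟩ := extraction_of_frequently_atTop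
    (hfreq.and_eventually (s.eventually_mem_closedBall hg hα hα' hmono hp))
  obtain ⟨q, -, ψ, hψ, hlim⟩ := tendsto_subseq_of_bounded Metric.isBounded_closedBall
    fun k => (hφ_spec k).2
  exact ⟨q, c, hc, φ ∘ ψ, (hφ.comp hψ).tendsto_atTop, fun k => (hφ_spec _).1, hlim⟩

end ProxExtrapolation

theorem alg2_converges_general [FiniteDimensional ℝ E] (s : ProxExtrapolation F g α)
    (hF : Continuous F)
    (hmono : ∀ p, IsVISolution F g p → ∀ z, 0 ≤ ⟪F z - F p, z - p⟫)
    (hg : ConvexOn ℝ univ g) (hα : 0 ≤ α) (hα' : α < √2 - 1) (hsol : ∃ p, IsVISolution F g p)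
    (hbdd : atTop.IsBoundedUnder (· ≤ ·) s.lam) (hlam : ¬ Tendsto s.lam atTop (𝓝 0)) :
    ∃ p, IsVISolution F g p ∧ Tendsto s.x atTop (𝓝 p) ∧ Tendsto s.y atTop (𝓝 p) := by
  have hgc : Continuous g := continuousOn_univ.1 (hg.continuousOn isOpen_univ)
  obtain ⟨p₀, hp₀⟩ := hsol
  have hres := s.tendsto_residual hg hα hα' (hmono p₀ hp₀) hp₀
  obtain ⟨p, c, hc, σ, hσ, hcσ, hx⟩ :=
    s.exists_tendsto_subseq_lam_gt hg hα hα' (hmono p₀ hp₀) hp₀ hlam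
  have hp : IsVISolution F g p :=
    isVISolution_of_tendsto_prox hF.continuousAt hgc.continuousAt hc (fun k => (hcσ k).le)
      (fun k => s.prox_inequality hg (σ k)) hx (s.tendsto_x_succ_subseq hres hσ hx)
      (s.tendsto_y_subseq hres hσ hx)
  have hx_lim := s.tendsto_of_tendsto_subseq hg hgc.continuousAt hα hα' (hmono p hp) hp hbdd hσ hx
  exact ⟨p, hp, hx_lim, s.tendsto_y_subseq hres tendsto_id hx_lim⟩

end InnerProductSpace

/-- Convergence of Algorithm 2 (Theorem 2.11 of the paper). -/
theorem alg2_converges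
    {E : Type*} [NormedAddCommGroup E] [InnerProductSpace ℝ E] [FiniteDimensional ℝ E]
    (F : E → E) (hFmono : ∀ x y : E, 0 ≤ ⟪F x - F y, x - y⟫) (hFlip : LocallyLipschitz F)
    (g : E → ℝ) (hg : ConvexOn ℝ Set.univ g)
    (α : ℝ) (hα : α ∈ Set.Ioo 0 (Real.sqrt 2 - 1))
    (lamMax : ℝ) (hmax : 0 < lamMax)
    (hsol : ∃ xs : E, ∀ z : E, 0 ≤ ⟪F xs, z - xs⟫ + g z - g xs)
    (x y : ℕ → E) (lam θ : ℕ → ℝ)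
    (hlampos : ∀ n, 0 < lam n) (hθ0 : θ 0 = 1) (hθpos : ∀ n, 1 ≤ n → 0 < θ n)
    (hlammax : ∀ n, 1 ≤ n → lam n ≤ lamMax)
    (hlamrec : ∀ n, 1 ≤ n → lam n = θ n * lam (n - 1))
    (hθrec : ∀ n, 1 ≤ n → θ n ^ 2 ≤ 1 + θ (n - 1))
    (hy : ∀ n, 1 ≤ n → y n = x n + θ n • (x n - x (n - 1)))
    (hls : ∀ n, 1 ≤ n → lam n * ‖F (y n) - F (y (n - 1))‖ ≤ α * ‖y n - y (n - 1)‖)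
    (hprox : ∀ n : ℕ, ∀ z : E,
      lam n * g (x (n + 1)) + (1 / 2) * ‖x (n + 1) - (x n - lam n • F (y n))‖ ^ 2 ≤
        lam n * g z + (1 / 2) * ‖z - (x n - lam n • F (y n))‖ ^ 2)
    (hlimsup : 0 < Filter.limsup lam Filter.atTop) :
    ∃ xs : E, (∀ z : E, 0 ≤ ⟪F xs, z - xs⟫ + g z - g xs) ∧
      Filter.Tendsto x Filter.atTop (nhds xs) ∧
      Filter.Tendsto y Filter.atTop (nhds xs) := by
  let run : ProxExtrapolation F g α :=
    { x, y, lam, θ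
      lam_pos := hlampos
      lam_succ := fun n => hlamrec (n + 1) n.succ_pos
      sq_θ_succ_le := fun n => hθrec (n + 1) n.succ_pos
      y_succ := fun n => hy (n + 1) n.succ_pos
      line_search := fun n => hls (n + 1) n.succ_pos
      isMinOn_prox := fun n => isMinOn_univ_iff.2 (hprox n) }
  have hbdd : atTop.IsBoundedUnder (· ≤ ·) lam :=
    isBoundedUnder_of_eventually_le ((eventually_ge_atTop 1).mono hlammax)
  exact alg2_converges_general run hFlip.continuous (fun p _ z => hFmono z p) hg hα.1.le hα.2 hsol
    hbdd fun hlam => hlimsup.ne' hlam.limsup_eq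
end

section
/- Let f : E → ℝ be convex and differentiable with gradient ∇f, g : E → ℝ convex, Φ := f + g, α ≥ 0, θ ∈ [1,2], λ_{n−1} > 0, θ_n > 0, and set λ_n = (2 − 1/θ)·θ_n·λ_{n−1}. Let x_{n−1}, x_n, x_{n+1}, y_{n−1}, y_n ∈ E satisfy: y_n = x_n + θ_n·(x_n − x_{n−1}); x_n is the minimizer over E of z ↦ λ_{n−1}·g(z) + (1/2)·‖z − (x_{n−1} − λ_{n−1}·∇f(y_{n−1}))‖²; x_{n+1} is the minimizer over E of z ↦ λ_n·g(z) + (1/2)·‖z − (x_n − λ_n·∇f(y_n))‖²; and λ_n·‖∇f(y_n) − ∇f(y_{n−1})‖ ≤ α·(2 − 1/θ)·‖y_n − y_{n−1}‖. Then for every x ∈ E: ‖x_{n+1} − x‖² ≤ ‖x_n − x‖² − (2θ − 1)·[(1 − α(1+√2))·‖x_n − y_n‖² + (1 − √2·α)·‖x_{n+1} − y_n‖² − α·‖x_n − y_{n−1}‖²] − 2·λ_n·((1 + θ·θ_n)·Φ(x_n) − θ·θ_n·Φ(x_{n−1}) − Φ(x)). -/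
open scoped RealInnerProductSpace

/-!
Optimality in a proximal step `x⁺ = prox_{λg}(x - λv)` means that `x - λv - x⁺` is a subgradient
of `λg` at `x⁺`. Test the new step at `z` (weight `1`) and at `xₙ` (weight `θ - 1`), and the
previous step at `xₙ₊₁` (weight `1`) and at `xₙ₋₁` (weight `θₙ`), the latter pair scaled by
`(2θ - 1) θₙ`: all `g (xₙ₊₁)` and `‖xₙ₊₁ - xₙ‖²` terms cancel. The subgradient inequalities for `f`
at `yₙ` and `xₙ` bound what is left of the gradient at `yₙ`, and the only remaining term,
`⟪∇f(yₙ₋₁) - ∇f(yₙ), xₙ₊₁ - yₙ⟫`, is controlled by the local Lipschitz condition and Young's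
inequality.
-/

section

variable {E : Type*} [NormedAddCommGroup E] [InnerProductSpace ℝ E]

/-- `v ∈ ∂f(x)`: the vector `v` is a subgradient of `f` at `x`, i.e. the affine function through
`(x, f x)` with slope `v` minorizes `f` on all of `E`. -/
def IsSubgradientAt (f : E → ℝ) (v x : E) : Prop :=
  ∀ z, f x + ⟪v, z - x⟫ ≤ f z

/-- `x = prox_φ(w)`, expressed by minimality; the step size `λ` of `prox_{λg}` is part of `φ`. -/
def IsProxPoint (φ : E → ℝ) (w x : E) : Prop :=
  ∀ z, φ x + 1 / 2 * ‖x - w‖ ^ 2 ≤ φ z + 1 / 2 * ‖z - w‖ ^ 2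

lemma IsSubgradientAt.of_hasGradientAt [CompleteSpace E] {f : E → ℝ} {v x : E}
    (hv : HasGradientAt f v x) (hf : ConvexOn ℝ Set.univ f) : IsSubgradientAt f v x := by
  intro z
  have hconv : ConvexOn ℝ Set.univ (f ∘ AffineMap.lineMap (k := ℝ) x z) := by
    simpa only [Set.preimage_univ] using hf.comp_affineMap (AffineMap.lineMap (k := ℝ) x z)
  have hderiv : HasDerivAt (f ∘ AffineMap.lineMap (k := ℝ) x z) ⟪v, z - x⟫ 0 := by
    refine HasFDerivAt.comp_hasDerivAt (0 : ℝ) (l' := InnerProductSpace.toDual ℝ E v) ?_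
      AffineMap.hasDerivAt_lineMap
    simpa only [AffineMap.lineMap_apply_zero] using hv.hasFDerivAt
  have hslope := hconv.le_slope_of_hasDerivAt (Set.mem_univ 0) (Set.mem_univ 1) one_pos hderiv
  simp only [slope_def_field, Function.comp_apply, AffineMap.lineMap_apply_zero,
    AffineMap.lineMap_apply_one, sub_zero, div_one] at hslope
  linarith

lemma IsSubgradientAt.extrapolation_le {f : E → ℝ} {v x x₀ y : E} {t : ℝ}
    (hv : IsSubgradientAt f v x) (ht : 0 ≤ t) (hy : y = x + t • (x - x₀)) (z : E) :
    (1 + t) * f x - t * f x₀ + ⟪v, z - y⟫ ≤ f z := by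
  have hz : z - y = (z - x) + t • (x₀ - x) := by rw [hy]; module
  have h₀ := mul_le_mul_of_nonneg_left (hv x₀) ht
  rw [hz, inner_add_right, real_inner_smul_right]
  linarith [hv z]

lemma IsSubgradientAt.relaxed_inner_le {f : E → ℝ} {v u x x₀ y : E} {t θ : ℝ}
    (hv : IsSubgradientAt f v y) (hu : IsSubgradientAt f u x) (ht : 0 ≤ t) (hθ : 1 ≤ θ)
    (hy : y = x + t • (x - x₀)) (z : E) :
    ⟪v, z - y⟫ + (θ - 1) * ⟪v, x - y⟫ ≤ f z - (1 + θ * t) * f x + θ * t * f x₀ := by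
  have hfy : (1 + t) * f x - t * f x₀ ≤ f y := by
    simpa only [sub_self, inner_zero_right, add_zero] using hu.extrapolation_le ht hy y
  have hx := mul_le_mul_of_nonneg_left (hv x) (sub_nonneg.2 hθ)
  have hy' := mul_le_mul_of_nonneg_left hfy (zero_le_one.trans hθ)
  linarith [hv z]

lemma IsProxPoint.isSubgradientAt {φ : E → ℝ} {w x : E} (hx : IsProxPoint φ w x)
    (hφ : ConvexOn ℝ Set.univ φ) : IsSubgradientAt φ (w - x) x := by
  intro z
  have hsegment : ∀ t ∈ Set.Ioc (0 : ℝ) 1,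
      φ x + ⟪w - x, z - x⟫ ≤ φ z + t / 2 * ‖z - x‖ ^ 2 := by
    rintro t ⟨ht₀, ht₁⟩
    have hmin := hx (x + t • (z - x))
    have hconv : φ (x + t • (z - x)) ≤ (1 - t) * φ x + t * φ z := by
      have h := hφ.2 (Set.mem_univ x) (Set.mem_univ z) (sub_nonneg.2 ht₁) ht₀.le
        (sub_add_cancel 1 t)
      rwa [show (1 - t) • x + t • z = x + t • (z - x) by module] at h
    have hnorm : ‖x + t • (z - x) - w‖ ^ 2
        = ‖x - w‖ ^ 2 - 2 * t * ⟪w - x, z - x⟫ + t ^ 2 * ‖z - x‖ ^ 2 := by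
      rw [show x + t • (z - x) - w = t • (z - x) - (w - x) by module, norm_sub_sq_real,
        norm_smul, mul_pow, Real.norm_eq_abs, sq_abs, real_inner_smul_left, real_inner_comm,
        norm_sub_rev w x]
      ring
    rw [hnorm] at hmin
    refine le_of_mul_le_mul_left ?_ ht₀
    linarith
  have hlim : Filter.Tendsto (fun t : ℝ ↦ φ z + t / 2 * ‖z - x‖ ^ 2)
      (nhdsWithin 0 (Set.Ioi 0)) (nhds (φ z)) := by
    have hcont : Continuous fun t : ℝ ↦ φ z + t / 2 * ‖z - x‖ ^ 2 := by fun_prop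
    simpa only [zero_div, zero_mul, add_zero] using (hcont.tendsto 0).mono_left nhdsWithin_le_nhds
  exact ge_of_tendsto hlim (Filter.mem_of_superset (Ioc_mem_nhdsGT one_pos) hsegment)

lemma IsProxPoint.norm_sub_sq_add_norm_sub_sq_le {φ : E → ℝ} {x p x' : E}
    (hx' : IsProxPoint φ (x - p) x') (hφ : ConvexOn ℝ Set.univ φ) (z : E) :
    ‖x' - z‖ ^ 2 + ‖x' - x‖ ^ 2 ≤ ‖x - z‖ ^ 2 + 2 * (φ z - φ x' + ⟪p, z - x'⟫) := by
  have hsub := hx'.isSubgradientAt hφ z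
  have hsplit : x - p - x' = (x - x') - p := by abel
  have hpolar : ‖x - z‖ ^ 2 = ‖x' - x‖ ^ 2 - 2 * ⟪x - x', z - x'⟫ + ‖x' - z‖ ^ 2 := by
    rw [show x - z = (x - x') - (z - x') by abel, norm_sub_sq_real, norm_sub_rev x x',
      norm_sub_rev z x']
  rw [hsplit, inner_sub_left] at hsub
  linarith

lemma IsProxPoint.norm_sub_extrapolation_sq_le {φ : E → ℝ} {x₀ p x y : E} {t : ℝ}
    (hx : IsProxPoint φ (x₀ - p) x) (hφ : ConvexOn ℝ Set.univ φ) (ht : 0 ≤ t)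
    (hy : y = x + t • (x - x₀)) (z : E) :
    ‖x - y‖ ^ 2 + ‖z - y‖ ^ 2 ≤
      ‖z - x‖ ^ 2 + 2 * t * (φ z - (1 + t) * φ x + t * φ x₀ + ⟪p, z - y⟫) := by
  have hsub := mul_le_mul_of_nonneg_left
    ((hx.isSubgradientAt hφ).extrapolation_le ht hy z) ht
  have hinner : t * ⟪x₀ - p - x, z - y⟫ = ⟪x - y, z - y⟫ - t * ⟪p, z - y⟫ := by
    rw [← real_inner_smul_left, ← real_inner_smul_left, ← inner_sub_left, hy]
    congr 1
    module
  have hpolar : ‖z - x‖ ^ 2 = ‖x - y‖ ^ 2 - 2 * ⟪x - y, z - y⟫ + ‖z - y‖ ^ 2 := by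
    rw [norm_sub_rev z x, show x - z = (x - y) - (z - y) by abel, norm_sub_sq_real]
  linarith

/-- `hstep` is the relation between the step sizes for which the `g x'` and `‖x' - x‖ ^ 2` terms of
the two steps cancel. -/
lemma relaxed_prox_grad_step_le {g : E → ℝ} (hg : ConvexOn ℝ Set.univ g) {x₀ x x' y u v : E}
    {l₀ l t θ : ℝ} (hl₀ : 0 ≤ l₀) (hl : 0 ≤ l) (ht : 0 ≤ t) (hθ : 1 ≤ θ)
    (hstep : θ * l = (2 * θ - 1) * (t * l₀)) (hy : y = x + t • (x - x₀))
    (hx : IsProxPoint (fun w ↦ l₀ * g w) (x₀ - l₀ • u) x)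
    (hx' : IsProxPoint (fun w ↦ l * g w) (x - l • v) x') (z : E) :
    ‖x' - z‖ ^ 2 + (2 * θ - 1) * (‖x - y‖ ^ 2 + ‖x' - y‖ ^ 2) ≤
      ‖x - z‖ ^ 2 + 2 * l * (g z - (1 + θ * t) * g x + θ * t * g x₀)
        + 2 * l * (⟪v, z - y⟫ + (θ - 1) * ⟪v, x - y⟫) + 2 * (θ * l) * ⟪u - v, x' - y⟫ := by
  have hconv : ConvexOn ℝ Set.univ fun w ↦ l * g w := hg.smul hl
  have hnew_z := hx'.norm_sub_sq_add_norm_sub_sq_le hconv z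
  have hnew_x := mul_le_mul_of_nonneg_left (hx'.norm_sub_sq_add_norm_sub_sq_le hconv x)
    (sub_nonneg.2 hθ)
  have hprev := mul_le_mul_of_nonneg_left
    (hx.norm_sub_extrapolation_sq_le (hg.smul hl₀) ht hy x') (by linarith : 0 ≤ 2 * θ - 1)
  have hscale : (2 * θ - 1) * (2 * t * (l₀ * g x' - (1 + t) * (l₀ * g x) + t * (l₀ * g x₀)
      + ⟪l₀ • u, x' - y⟫))
      = 2 * (θ * l) * (g x' - (1 + t) * g x + t * g x₀ + ⟪u, x' - y⟫) := by
    rw [hstep, real_inner_smul_left]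
    ring
  rw [mul_add _ (‖x' - x‖ ^ 2), hscale] at hprev
  simp only [real_inner_smul_left, inner_sub_left, inner_sub_right, sub_self, norm_zero]
    at hnew_z hnew_x hprev ⊢
  linarith

lemma two_mul_mul_le_of_le_add {a b p q : ℝ} (ha : 0 ≤ a) (h : a ≤ p + q) :
    2 * (a * b) ≤ (1 + √2) * p ^ 2 + √2 * b ^ 2 + q ^ 2 := by
  have hs : √2 ^ 2 = 2 := Real.sq_sqrt zero_le_two
  have hyoung : 2 * (a * b) ≤ √2 / 2 * a ^ 2 + √2 * b ^ 2 := by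
    have hsq : √2 / 2 * a ^ 2 + √2 * b ^ 2 - 2 * (a * b) = √2 / 2 * (a - √2 * b) ^ 2 := by
      linear_combination (a * b - √2 / 2 * b ^ 2) * hs
    have hnonneg : 0 ≤ √2 / 2 * (a - √2 * b) ^ 2 := by positivity
    linarith
  have hsum : √2 / 2 * (p + q) ^ 2 ≤ (1 + √2) * p ^ 2 + q ^ 2 := by
    have hsq : (1 + √2) * p ^ 2 + q ^ 2 - √2 / 2 * (p + q) ^ 2
        = (1 + √2 / 2) * (p - (√2 - 1) * q) ^ 2 := by
      linear_combination (p * q - √2 / 2 * q ^ 2) * hs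
    have hnonneg : 0 ≤ (1 + √2 / 2) * (p - (√2 - 1) * q) ^ 2 := by positivity
    linarith
  calc 2 * (a * b) ≤ √2 / 2 * a ^ 2 + √2 * b ^ 2 := hyoung
    _ ≤ √2 / 2 * (p + q) ^ 2 + √2 * b ^ 2 := by gcongr
    _ ≤ (1 + √2) * p ^ 2 + √2 * b ^ 2 + q ^ 2 := by linarith

lemma two_mul_inner_le_of_norm_le {d x y y₀ z : E} {κ : ℝ} (hκ : 0 ≤ κ) (hd : ‖d‖ ≤ κ * ‖y - y₀‖) :
    2 * ⟪d, z - y⟫ ≤ κ * ((1 + √2) * ‖x - y‖ ^ 2 + √2 * ‖z - y‖ ^ 2 + ‖x - y₀‖ ^ 2) := by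
  have htri : ‖y - y₀‖ ≤ ‖x - y‖ + ‖x - y₀‖ := by
    simpa only [norm_sub_rev x y] using norm_sub_le_norm_sub_add_norm_sub y x y₀
  calc 2 * ⟪d, z - y⟫ ≤ 2 * (‖d‖ * ‖z - y‖) := by gcongr; exact real_inner_le_norm d (z - y)
    _ ≤ 2 * (κ * ‖y - y₀‖ * ‖z - y‖) := by gcongr
    _ = κ * (2 * (‖y - y₀‖ * ‖z - y‖)) := by ring
    _ ≤ _ := mul_le_mul_of_nonneg_left (two_mul_mul_le_of_le_add (norm_nonneg _) htri) hκ

end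

theorem basic_lemma_alg3_general
    {E : Type*} [NormedAddCommGroup E] [InnerProductSpace ℝ E]
    (f : E → ℝ) (f' : E → E) (hf' : ∀ z : E, IsSubgradientAt f (f' z) z)
    (g : E → ℝ) (hg : ConvexOn ℝ Set.univ g)
    (Φ : E → ℝ) (hΦ : ∀ z : E, Φ z = f z + g z)
    (α : ℝ) (hα : 0 ≤ α) (th : ℝ) (hth : 1 ≤ th)
    (lamm1 θn : ℝ) (hlamm1 : 0 ≤ lamm1) (hθn : 0 ≤ θn)
    (lamn : ℝ) (hlamn : lamn = (2 - 1 / th) * θn * lamm1)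
    (xnm1 xn xnp1 ynm1 yn : E)
    (hyn : yn = xn + θn • (xn - xnm1))
    (hxn : IsProxPoint (fun z ↦ lamm1 * g z) (xnm1 - lamm1 • f' ynm1) xn)
    (hxnp1 : IsProxPoint (fun z ↦ lamn * g z) (xn - lamn • f' yn) xnp1)
    (hls : lamn * ‖f' yn - f' ynm1‖ ≤ α * (2 - 1 / th) * ‖yn - ynm1‖) (z : E) :
    ‖xnp1 - z‖ ^ 2 ≤ ‖xn - z‖ ^ 2
      - (2 * th - 1) *
        ((1 - α * (1 + √2)) * ‖xn - yn‖ ^ 2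
          + (1 - √2 * α) * ‖xnp1 - yn‖ ^ 2
          - α * ‖xn - ynm1‖ ^ 2)
      - 2 * lamn * ((1 + th * θn) * Φ xn - th * θn * Φ xnm1 - Φ z) := by
  have hth₀ : 0 < th := one_pos.trans_le hth
  have hκ : 0 ≤ 2 * th - 1 := by linarith
  have hstep : th * lamn = (2 * th - 1) * (θn * lamm1) := by
    rw [hlamn]
    field_simp
  have hlamn₀ : 0 ≤ lamn := nonneg_of_mul_nonneg_right (by rw [hstep]; positivity) hth₀
  have hlip : ‖(th * lamn) • (f' ynm1 - f' yn)‖ ≤ (2 * th - 1) * α * ‖yn - ynm1‖ := by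
    rw [norm_smul, Real.norm_of_nonneg (by positivity), norm_sub_rev, mul_assoc]
    calc th * (lamn * ‖f' yn - f' ynm1‖) ≤ th * (α * (2 - 1 / th) * ‖yn - ynm1‖) := by gcongr
      _ = (2 * th - 1) * α * ‖yn - ynm1‖ := by field_simp
  have hprox := relaxed_prox_grad_step_le hg hlamm1 hlamn₀ hθn hth hstep hyn hxn hxnp1 z
  have hgrad := mul_le_mul_of_nonneg_left ((hf' yn).relaxed_inner_le (hf' xn) hθn hth hyn z)
    hlamn₀
  have herr := two_mul_inner_le_of_norm_le (x := xn) (z := xnp1) (mul_nonneg hκ hα) hlip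
  rw [real_inner_smul_left] at herr
  rw [hΦ, hΦ, hΦ]
  linarith

/-- Basic inequality for Algorithm 3 (Lemma 3.1 of the paper). -/
theorem basic_lemma_alg3
    {E : Type*} [NormedAddCommGroup E] [InnerProductSpace ℝ E] [FiniteDimensional ℝ E]
    (f : E → ℝ) (hf : ConvexOn ℝ Set.univ f)
    (f' : E → E) (hf' : ∀ z : E, HasGradientAt f (f' z) z)
    (g : E → ℝ) (hg : ConvexOn ℝ Set.univ g)
    (Φ : E → ℝ) (hΦ : ∀ z : E, Φ z = f z + g z)
    (α : ℝ) (hα : 0 ≤ α) (th : ℝ) (hth : th ∈ Set.Icc (1 : ℝ) 2)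
    (lamm1 θn : ℝ) (hlamm1 : 0 < lamm1) (hθn : 0 < θn)
    (lamn : ℝ) (hlamn : lamn = (2 - 1 / th) * θn * lamm1)
    (xnm1 xn xnp1 ynm1 yn : E)
    (hyn : yn = xn + θn • (xn - xnm1))
    (hxn : ∀ z : E, lamm1 * g xn + (1 / 2) * ‖xn - (xnm1 - lamm1 • f' ynm1)‖ ^ 2 ≤
      lamm1 * g z + (1 / 2) * ‖z - (xnm1 - lamm1 • f' ynm1)‖ ^ 2)
    (hxnp1 : ∀ z : E, lamn * g xnp1 + (1 / 2) * ‖xnp1 - (xn - lamn • f' yn)‖ ^ 2 ≤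
      lamn * g z + (1 / 2) * ‖z - (xn - lamn • f' yn)‖ ^ 2)
    (hls : lamn * ‖f' yn - f' ynm1‖ ≤ α * (2 - 1 / th) * ‖yn - ynm1‖) :
    ∀ z : E,
      ‖xnp1 - z‖ ^ 2 ≤ ‖xn - z‖ ^ 2
        - (2 * th - 1) *
          ((1 - α * (1 + Real.sqrt 2)) * ‖xn - yn‖ ^ 2
            + (1 - Real.sqrt 2 * α) * ‖xnp1 - yn‖ ^ 2
            - α * ‖xn - ynm1‖ ^ 2)
        - 2 * lamn * ((1 + th * θn) * Φ xn - th * θn * Φ xnm1 - Φ z) := by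
  exact basic_lemma_alg3_general f f' (fun z ↦ .of_hasGradientAt (hf' z) hf) g hg Φ hΦ α hα th
    hth.1 lamm1 θn hlamm1.le hθn.le lamn hlamn xnm1 xn xnp1 ynm1 yn hyn hxn hxnp1 hls
end
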